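/- arXiv:1807.04146 — 2 statements merged into one kernel-verified Lean document; each statement's English description precedes it below -/
import Mathlib

section
/- Suppose ∂_u f(t,u) is locally Lipschitz continuous in u uniformly with respect to t, and let p ∈ X_per. If there exists a symmetrically decreasing T-periodic entire solution U(x,t) of U_t = U_xx + f(t,U) on ℝ × ℝ whose base is p (i.e. U(x,t) → p(t) as |x| → ∞), then p ∉ Y_per; that is, for every ε > 0 there exists a ∈ (p(0), p(0)+ε) such that h(T;a) < a. -/
open Filter Topology Set MeasureTheory

noncomputable section

/-- `u` satisfies `u_t = u_xx + f(t,u)` for `x ∈ sx`, `t ∈ st`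
(with the required differentiability in space and time). -/
def SatPDE (f u : ℝ → ℝ → ℝ) (sx st : Set ℝ) : Prop :=
  ∀ x ∈ sx, ∀ t ∈ st,
    DifferentiableAt ℝ (fun y => u y t) x ∧
    DifferentiableAt ℝ (deriv fun y => u y t) x ∧
    HasDerivAt (fun τ => u x τ) (deriv (deriv fun y => u y t) x + f t (u x t)) t

/-- entire solution of `U_t = U_xx + f(t,U)` on `ℝ × ℝ`. -/
def EntireSol (f U : ℝ → ℝ → ℝ) : Prop := SatPDE f U Set.univ Set.univ

/-- classical (for `t > 0`) solution of the Cauchy problem with initial datum `u₀`. -/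
def CauchySol (f : ℝ → ℝ → ℝ) (u₀ : ℝ → ℝ) (u : ℝ → ℝ → ℝ) : Prop :=
  SatPDE f u Set.univ (Set.Ioi 0) ∧
  ContinuousOn (fun q : ℝ × ℝ => u q.1 q.2) (Set.univ ×ˢ Set.Ioi 0) ∧
  ∀ x, u x 0 = u₀ x

/-- `U` is `T`-periodic in time. -/
def TPer (T : ℝ) (U : ℝ → ℝ → ℝ) : Prop := ∀ x t, U x (t + T) = U x t

/-- `U` is spatially constant. -/
def SpatConst (U : ℝ → ℝ → ℝ) : Prop := ∀ x y t, U x t = U y t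

/-- `U` is symmetrically decreasing with respect to `x₀`. -/
def SymDecr (U : ℝ → ℝ → ℝ) (x₀ : ℝ) : Prop :=
  (∀ x t, U (2 * x₀ - x) t = U x t) ∧ ∀ x t : ℝ, x₀ < x → deriv (fun y => U y t) x < 0

/-- `v` is symmetric with respect to `x₀` and nonincreasing away from `x₀`. -/
def SymNonincr (v : ℝ → ℝ → ℝ) (x₀ : ℝ) : Prop :=
  (∀ x t, v (2 * x₀ - x) t = v x t) ∧
  (∀ x t : ℝ, x < x₀ → 0 ≤ deriv (fun y => v y t) x) ∧
  (∀ x t : ℝ, x₀ < x → deriv (fun y => v y t) x ≤ 0)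

/-- `g` solves the ODE `g' = f(t, g)` on the set `s`. -/
def ODESolOn (f : ℝ → ℝ → ℝ) (g : ℝ → ℝ) (s : Set ℝ) : Prop :=
  ∀ t ∈ s, HasDerivAt g (f t (g t)) t

/-- `p` is a nonnegative `T`-periodic solution of `p' = f(t,p)`. -/
def XPer (T : ℝ) (f : ℝ → ℝ → ℝ) (p : ℝ → ℝ) : Prop :=
  (∀ t, 0 ≤ p t) ∧ (∀ t, p (t + T) = p t) ∧ ODESolOn f p Set.univ

/-- `p` is the base of `U`, i.e. `U(x,t) → p(t)` as `|x| → ∞`. -/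
def HasBase (U : ℝ → ℝ → ℝ) (p : ℝ → ℝ) : Prop :=
  ∀ t, Tendsto (fun x => U x t) atTop (nhds (p t)) ∧
    Tendsto (fun x => U x t) atBot (nhds (p t))

/-- `U` is an ω-limit solution of `u`: an entire solution which is the locally uniform
limit of `u(x, t + kⱼ T)` for some sequence of positive integers `kⱼ → ∞`. -/
def OmegaLimitSol (T : ℝ) (f u U : ℝ → ℝ → ℝ) : Prop :=
  EntireSol f U ∧
  ∃ k : ℕ → ℕ, StrictMono k ∧ (∀ j, 0 < k j) ∧
    TendstoLocallyUniformly
      (fun j (q : ℝ × ℝ) => u q.1 (q.2 + (k j : ℝ) * T)) (fun q => U q.1 q.2) atTop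

/-- `φ` is an ω-limit point of `u`: `u(·, kⱼ T) → φ` in `L^∞_loc(ℝ)`. -/
def OmegaLimitPt (T : ℝ) (u : ℝ → ℝ → ℝ) (φ : ℝ → ℝ) : Prop :=
  ∃ k : ℕ → ℕ, StrictMono k ∧ (∀ j, 0 < k j) ∧
    TendstoLocallyUniformly (fun j x => u x ((k j : ℝ) * T)) φ atTop

/-- the solution `h(·;a)` of `h' = f(t,h)`, `h(0) = a`, is `T`-monotone nondecreasing
(formulated for every solution with initial value `a`; the solution is unique). -/
def TMonNondecFrom (T : ℝ) (f : ℝ → ℝ → ℝ) (a : ℝ) : Prop :=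
  ∀ g : ℝ → ℝ, ODESolOn f g (Set.Ici 0) → g 0 = a → ∀ t : ℝ, 0 ≤ t → g t ≤ g (t + T)

/-- the solution `h(·;a)` is `T`-monotone decreasing. -/
def TMonDecFrom (T : ℝ) (f : ℝ → ℝ → ℝ) (a : ℝ) : Prop :=
  ∀ g : ℝ → ℝ, ODESolOn f g (Set.Ici 0) → g 0 = a → ∀ t : ℝ, 0 ≤ t → g (t + T) < g t

/-- the solution `h(·;a)` is `T`-monotone nonincreasing. -/
def TMonNonincFrom (T : ℝ) (f : ℝ → ℝ → ℝ) (a : ℝ) : Prop :=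
  ∀ g : ℝ → ℝ, ODESolOn f g (Set.Ici 0) → g 0 = a → ∀ t : ℝ, 0 ≤ t → g (t + T) ≤ g t

/-- `p ∈ Y_per`. -/
def YPer (T : ℝ) (f : ℝ → ℝ → ℝ) (p : ℝ → ℝ) : Prop :=
  XPer T f p ∧ ∃ ε > 0, ∀ a ∈ Set.Ioo (p 0) (p 0 + ε), TMonNondecFrom T f a

/-- `p` is linearly stable: `∫₀ᵀ ∂ᵤf(t, p(t)) dt < 0`. -/
def LinStable (T : ℝ) (f : ℝ → ℝ → ℝ) (p : ℝ → ℝ) : Prop :=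
  (∫ t in (0:ℝ)..T, deriv (f t) (p t)) < 0

/-- `p` is stable from above for the ODE `h' = f(t,h)`. -/
def StableFromAbove (f : ℝ → ℝ → ℝ) (p : ℝ → ℝ) : Prop :=
  ∀ ε > 0, ∃ δ > 0, ∀ a ∈ Set.Icc (p 0) (p 0 + δ),
    ∀ g : ℝ → ℝ, ODESolOn f g (Set.Ici 0) → g 0 = a → ∀ t : ℝ, 0 ≤ t → |g t - p t| ≤ ε

/-- `p` is stable from below for the ODE `h' = f(t,h)`. -/
def StableFromBelow (f : ℝ → ℝ → ℝ) (p : ℝ → ℝ) : Prop :=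
  ∀ ε > 0, ∃ δ > 0, ∀ a ∈ Set.Icc (p 0 - δ) (p 0),
    ∀ g : ℝ → ℝ, ODESolOn f g (Set.Ici 0) → g 0 = a → ∀ t : ℝ, 0 ≤ t → |g t - p t| ≤ ε

/-- `Zsc w`: the number of sign changes of `w` on `ℝ` (a value in `ℕ∞`). -/
def Zsc (w : ℝ → ℝ) : ℕ∞ :=
  ⨆ k ∈ {k : ℕ | ∃ x : Fin (k + 1) → ℝ, StrictMono x ∧
      ∀ i : Fin k, w (x i.castSucc) * w (x i.succ) < 0}, (k : ℕ∞)

/-- A lower bound on symmetric second differences bounds the second derivative. -/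
lemma second_diff {φ : ℝ → ℝ} (h1 : Differentiable ℝ φ) (x : ℝ)
    (h2 : DifferentiableAt ℝ (deriv φ) x) (c r : ℝ) (hr : 0 < r)
    (h : ∀ d, 0 < d → d < r → c * d ^ 2 ≤ φ (x + d) + φ (x - d) - 2 * φ x) :
    c ≤ deriv (deriv φ) x := by
  by_contra! hlt
  set m := deriv (deriv φ) x with hm
  have hG : HasDerivAt (fun d => deriv φ (x + d) - deriv φ (x - d) - 2 * c * d)
      (2 * m - 2 * c) 0 := by
    have e1 : HasDerivAt (fun d : ℝ => deriv φ (x + d)) m 0 := by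
      have := h2.hasDerivAt
      exact HasDerivAt.comp_const_add x 0 (by rw [add_zero]; exact this)
    have e2 : HasDerivAt (fun d : ℝ => deriv φ (x - d)) (-m) 0 := by
      have := h2.hasDerivAt
      exact HasDerivAt.comp_const_sub x 0 (by rw [sub_zero]; exact this)
    have e3 : HasDerivAt (fun d : ℝ => 2 * c * d) (2 * c) 0 := by
      simpa using (hasDerivAt_id (0:ℝ)).const_mul (2 * c)
    exact HasDerivAt.congr_deriv ((e1.sub e2).sub e3) (by ring)
  have hneg : ∀ᶠ d in 𝓝[>] (0:ℝ), deriv φ (x + d) - deriv φ (x - d) - 2 * c * d < 0 := by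
    have := (hasDerivAt_iff_tendsto_slope.1 hG).mono_left
      (nhdsWithin_mono 0 (fun y (hy : (0:ℝ) < y) => (ne_of_gt hy : y ≠ 0)))
    have h3 := this.eventually (gt_mem_nhds (show 2 * m - 2 * c < 0 by linarith))
    filter_upwards [h3, self_mem_nhdsWithin] with d hd hd0
    have hd0' : (0:ℝ) < d := hd0
    simp only [slope_def_field] at hd
    simp only [sub_zero, add_zero, mul_zero, sub_self] at hd
    rw [div_lt_iff₀ hd0'] at hd
    linarith
  obtain ⟨r', hr', hsub⟩ := (mem_nhdsGT_iff_exists_Ioo_subset).1 hneg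
  have hr'0 : (0:ℝ) < r' := hr'
  set d := min r r' / 2 with hd
  have hmin : 0 < min r r' := lt_min hr hr'0
  have hd0 : 0 < d := by positivity
  have hdr : d < r := by have := min_le_left r r'; linarith
  have hdr' : d < r' := by have := min_le_right r r'; linarith
  have hψ : ∀ s, HasDerivAt (fun s => φ (x + s) + φ (x - s) - 2 * φ x - c * s ^ 2)
      (deriv φ (x + s) - deriv φ (x - s) - 2 * c * s) s := by
    intro s
    have e1 : HasDerivAt (fun d : ℝ => φ (x + d)) (deriv φ (x + s)) s :=
      HasDerivAt.comp_const_add x s (h1 _).hasDerivAt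
    have e2 : HasDerivAt (fun d : ℝ => φ (x - d)) (-deriv φ (x - s)) s :=
      HasDerivAt.comp_const_sub x s (h1 _).hasDerivAt
    have e3 : HasDerivAt (fun d : ℝ => c * d ^ 2) (c * (2 * s)) s := by
      simpa using (hasDerivAt_pow 2 s).const_mul c
    exact HasDerivAt.congr_deriv (((e1.add e2).sub_const (2 * φ x)).sub e3) (by ring)
  have hanti : StrictAntiOn (fun s => φ (x + s) + φ (x - s) - 2 * φ x - c * s ^ 2)
      (Icc 0 d) := by
    apply strictAntiOn_of_deriv_neg (convex_Icc 0 d)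
    · exact fun s _ => (hψ s).continuousAt.continuousWithinAt
    · intro s hs
      rw [interior_Icc] at hs
      rw [(hψ s).deriv]
      exact hsub ⟨hs.1, hs.2.trans hdr'⟩
  have h4 := hanti (left_mem_Icc.2 hd0.le) (right_mem_Icc.2 hd0.le) hd0
  have h5 := h d hd0 hdr
  simp at h4
  linarith

/-- Two solutions of the ODE stay ordered, with exponential bounds on their gap. -/
lemma ode_fence {f : ℝ → ℝ → ℝ} {T K Λ : ℝ} (hΛ : 0 ≤ Λ)
    (hLip : ∀ t ∈ Icc 0 T, ∀ v ∈ Icc 0 K, ∀ w ∈ Icc 0 K, |f t v - f t w| ≤ Λ * |v - w|)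
    {φ g : ℝ → ℝ} (hφ : ODESolOn f φ (Icc 0 T)) (hg : ODESolOn f g (Icc 0 T))
    (h0 : φ 0 < g 0) (hφ0 : ∀ t ∈ Icc 0 T, 0 ≤ φ t)
    (hφK : ∀ t ∈ Icc 0 T, φ t + (g 0 - φ 0) * Real.exp ((Λ + 1) * T) ≤ K) :
    ∀ t ∈ Icc 0 T, φ t + (g 0 - φ 0) * Real.exp (-((Λ + 1) * t)) ≤ g t ∧
      g t ≤ φ t + (g 0 - φ 0) * Real.exp ((Λ + 1) * t) := by
  have hpos : 0 < g 0 - φ 0 := by linarith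
  have hexp : ∀ t ∈ Icc 0 T, Real.exp ((Λ + 1) * t) ≤ Real.exp ((Λ + 1) * T) := by
    intro t ht
    apply Real.exp_le_exp.2
    have := ht.2
    gcongr
  have hexp' : ∀ t ∈ Icc 0 T, Real.exp (-((Λ + 1) * t)) ≤ Real.exp ((Λ + 1) * T) := by
    intro t ht
    apply Real.exp_le_exp.2
    have := ht.1; have := ht.2
    nlinarith
  have dU : ∀ t ∈ Icc 0 T, HasDerivAt (fun t => φ t + (g 0 - φ 0) * Real.exp ((Λ + 1) * t))
      (f t (φ t) + (Λ + 1) * ((g 0 - φ 0) * Real.exp ((Λ + 1) * t))) t := by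
    intro t ht
    have e : HasDerivAt (fun t => Real.exp ((Λ + 1) * t))
        (Real.exp ((Λ + 1) * t) * ((Λ + 1) * 1)) t :=
      ((hasDerivAt_id t).const_mul (Λ + 1)).exp
    exact HasDerivAt.congr_deriv ((hφ t ht).add (e.const_mul (g 0 - φ 0))) (by ring)
  have dL : ∀ t ∈ Icc 0 T, HasDerivAt (fun t => φ t + (g 0 - φ 0) * Real.exp (-((Λ + 1) * t)))
      (f t (φ t) - (Λ + 1) * ((g 0 - φ 0) * Real.exp (-((Λ + 1) * t)))) t := by
    intro t ht
    have e : HasDerivAt (fun t => Real.exp (-((Λ + 1) * t)))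
        (Real.exp (-((Λ + 1) * t)) * (-((Λ + 1) * 1))) t :=
      (((hasDerivAt_id t).const_mul (Λ + 1)).neg).exp
    exact HasDerivAt.congr_deriv ((hφ t ht).add (e.const_mul (g 0 - φ 0))) (by ring)
  have key : ∀ t ∈ Icc 0 T, ∀ q, 0 < q → q ≤ (g 0 - φ 0) * Real.exp ((Λ + 1) * T) →
      |f t (φ t + q) - f t (φ t)| ≤ Λ * q := by
    intro t ht q hq hqK
    have h1 := hφ0 t ht
    have h2 := hφK t ht
    have := hLip t ht (φ t + q) ⟨by linarith, by linarith⟩ (φ t) ⟨by linarith, by linarith⟩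
    rwa [add_sub_cancel_left, abs_of_pos hq] at this
  have ico : ∀ t ∈ Ico 0 T, t ∈ Icc 0 T := fun t ht => Ico_subset_Icc_self ht
  intro t ht
  constructor
  · refine image_le_of_deriv_right_lt_deriv_boundary' (a := 0) (b := T)
      (f := fun t => φ t + (g 0 - φ 0) * Real.exp (-((Λ + 1) * t))) (B := g)
      (f' := fun t => f t (φ t) - (Λ + 1) * ((g 0 - φ 0) * Real.exp (-((Λ + 1) * t))))
      (B' := fun t => f t (g t))
      (fun s hs => (dL s hs).continuousAt.continuousWithinAt)
      (fun s hs => (dL s (ico s hs)).hasDerivWithinAt) (by simp)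
      (fun s hs => (hg s hs).continuousAt.continuousWithinAt)
      (fun s hs => (hg s (ico s hs)).hasDerivWithinAt) ?_ ht
    intro s hs hc
    have hq : 0 < (g 0 - φ 0) * Real.exp (-((Λ + 1) * s)) := by positivity
    have h3 := key s (ico s hs) _ hq (by have := hexp' s (ico s hs); gcongr)
    have h4 := abs_le.1 h3
    rw [← hc]
    nlinarith [h4.1]
  · refine image_le_of_deriv_right_lt_deriv_boundary' (a := 0) (b := T)
      (B := fun t => φ t + (g 0 - φ 0) * Real.exp ((Λ + 1) * t)) (f := g)
      (B' := fun t => f t (φ t) + (Λ + 1) * ((g 0 - φ 0) * Real.exp ((Λ + 1) * t)))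
      (f' := fun t => f t (g t))
      (fun s hs => (hg s hs).continuousAt.continuousWithinAt)
      (fun s hs => (hg s (ico s hs)).hasDerivWithinAt) (by simp)
      (fun s hs => (dU s hs).continuousAt.continuousWithinAt)
      (fun s hs => (dU s (ico s hs)).hasDerivWithinAt) ?_ ht
    intro s hs hc
    have hq : 0 < (g 0 - φ 0) * Real.exp ((Λ + 1) * s) := by positivity
    have h3 := key s (ico s hs) _ hq (by have := hexp s (ico s hs); gcongr)
    have h4 := abs_le.1 h3
    rw [hc]
    nlinarith [h4.2]

/-- Uniform Lipschitz and second-order Taylor bounds for `f`. -/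
lemma f_bounds {T : ℝ} {f : ℝ → ℝ → ℝ}
    (hf_cont : Continuous fun q : ℝ × ℝ => f q.1 q.2)
    (hf_C1 : ∀ t, ContDiff ℝ 1 (f t)) {K L₀ : ℝ} (hK : 0 < K)
    (hfLip : ∀ t : ℝ, ∀ v ∈ Set.Icc (0:ℝ) K, ∀ w ∈ Set.Icc (0:ℝ) K,
      |deriv (f t) v - deriv (f t) w| ≤ L₀ * |v - w|) :
    ∃ Λ L : ℝ, 0 ≤ Λ ∧ 0 ≤ L ∧ ∀ t ∈ Icc 0 T, ∀ v ∈ Icc 0 K, ∀ w ∈ Icc 0 K,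
      |deriv (f t) w| ≤ Λ ∧ |f t v - f t w| ≤ Λ * |v - w| ∧
      |f t v - f t w - deriv (f t) w * (v - w)| ≤ L * (v - w) ^ 2 := by
  obtain ⟨M, hM⟩ := ((isCompact_Icc (a := (0:ℝ)) (b := T)).prod
    (isCompact_Icc (a := (0:ℝ)) (b := K))).exists_bound_of_continuousOn hf_cont.continuousOn
  set L := max L₀ 0 with hL
  have hL0 : 0 ≤ L := le_max_right _ _
  have hLip : ∀ t : ℝ, ∀ v ∈ Set.Icc (0:ℝ) K, ∀ w ∈ Set.Icc (0:ℝ) K,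
      |deriv (f t) v - deriv (f t) w| ≤ L * |v - w| := fun t v hv w hw =>
    (hfLip t v hv w hw).trans (by gcongr; exact le_max_left _ _)
  have hdiff : ∀ t, Differentiable ℝ (f t) := fun t => (hf_C1 t).differentiable (by norm_num)
  -- mean value form
  have mvt : ∀ t, ∀ v ∈ Icc 0 K, ∀ w ∈ Icc 0 K, ∃ ξ ∈ Icc 0 K, |ξ - w| ≤ |v - w| ∧
      f t v - f t w = deriv (f t) ξ * (v - w) := by
    intro t v hv w hw
    rcases lt_trichotomy v w with h | h | h
    · obtain ⟨ξ, hξ, he⟩ := exists_deriv_eq_slope (f t) h (hdiff t).continuous.continuousOn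
        (hdiff t).differentiableOn
      refine ⟨ξ, ⟨by linarith [hv.1, hξ.1], by linarith [hw.2, hξ.2]⟩, ?_, ?_⟩
      · rw [abs_of_neg (by linarith [hξ.2]), abs_of_neg (by linarith)]; linarith [hξ.1]
      · rw [he]; field_simp [show w - v ≠ 0 by linarith]; ring
    · exact ⟨w, hw, by simp, by simp [h]⟩
    · obtain ⟨ξ, hξ, he⟩ := exists_deriv_eq_slope (f t) h (hdiff t).continuous.continuousOn
        (hdiff t).differentiableOn
      refine ⟨ξ, ⟨by linarith [hw.1, hξ.1], by linarith [hv.2, hξ.2]⟩, ?_, ?_⟩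
      · rw [abs_of_pos (by linarith [hξ.1]), abs_of_pos (by linarith)]; linarith [hξ.2]
      · rw [he]; field_simp [show v - w ≠ 0 by linarith]
  have hΛ : ∀ t ∈ Icc 0 T, ∀ w ∈ Icc 0 K, |deriv (f t) w| ≤ 2 * |M| / K + L * K := by
    intro t ht w hw
    obtain ⟨ξ, hξ, -, he⟩ := mvt t K ⟨hK.le, le_rfl⟩ 0 ⟨le_rfl, hK.le⟩
    have h1 := hM (t, K) ⟨ht, hK.le, le_rfl⟩
    have h2 := hM (t, 0) ⟨ht, le_rfl, hK.le⟩
    simp only [Real.norm_eq_abs] at h1 h2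
    have h3 : |deriv (f t) ξ| ≤ 2 * |M| / K := by
      rw [le_div_iff₀ hK]
      have : |deriv (f t) ξ| * K = |f t K - f t 0| := by
        rw [he, abs_mul, sub_zero, abs_of_pos hK]
      rw [this]
      have := abs_sub (f t K) (f t 0)
      have := le_abs_self M
      linarith
    have h4 := hLip t w hw ξ hξ
    have h5 : |w - ξ| ≤ K := abs_le.2 ⟨by linarith [hw.1, hξ.2], by linarith [hw.2, hξ.1]⟩
    have h6 : L * |w - ξ| ≤ L * K := by gcongr
    have h7 := abs_sub_abs_le_abs_sub (deriv (f t) w) (deriv (f t) ξ)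
    linarith
  refine ⟨2 * |M| / K + L * K, L, by positivity, hL0, ?_⟩
  intro t ht v hv w hw
  obtain ⟨ξ, hξ, hd, he⟩ := mvt t v hv w hw
  refine ⟨hΛ t ht w hw, ?_, ?_⟩
  · rw [he, abs_mul]
    exact mul_le_mul_of_nonneg_right (hΛ t ht ξ hξ) (abs_nonneg _)
  · rw [he, ← sub_mul, abs_mul, ← sq_abs, sq, ← mul_assoc]
    apply mul_le_mul_of_nonneg_right _ (abs_nonneg _)
    exact (hLip t ξ hξ w hw).trans (by gcongr)

/-- Lower bound on second differences of the flow in the initial value. -/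
lemma ode_second {f : ℝ → ℝ → ℝ} {T K Λ L : ℝ} (hΛ : 0 ≤ Λ) (hL : 0 ≤ L)
    (hb : ∀ t ∈ Icc 0 T, ∀ v ∈ Icc 0 K, ∀ w ∈ Icc 0 K,
      |deriv (f t) w| ≤ Λ ∧ |f t v - f t w| ≤ Λ * |v - w| ∧
      |f t v - f t w - deriv (f t) w * (v - w)| ≤ L * (v - w) ^ 2)
    {ga gb gc : ℝ → ℝ} (ha : ODESolOn f ga (Icc 0 T)) (hgb : ODESolOn f gb (Icc 0 T))
    (hc : ODESolOn f gc (Icc 0 T))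
    (ra : ∀ t ∈ Icc 0 T, ga t ∈ Icc 0 K) (rb : ∀ t ∈ Icc 0 T, gb t ∈ Icc 0 K)
    (rc : ∀ t ∈ Icc 0 T, gc t ∈ Icc 0 K) {η σ : ℝ}
    (db : ∀ t ∈ Icc 0 T, |gb t - ga t| ≤ η) (dc : ∀ t ∈ Icc 0 T, |gc t - ga t| ≤ η)
    (hσ : σ ≤ gb 0 + gc 0 - 2 * ga 0) (hσ0 : 0 < σ)
    (hlt : 2 * L * η ^ 2 < σ * Real.exp (-((Λ + 1) * T))) :
    ∀ t ∈ Icc 0 T, σ * Real.exp (-((Λ + 1) * T)) ≤ gb t + gc t - 2 * ga t := by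
  have hexp : ∀ t ∈ Icc 0 T, Real.exp (-((Λ + 1) * T)) ≤ Real.exp (-((Λ + 1) * t)) := by
    intro t ht
    apply Real.exp_le_exp.2
    have := ht.1; have := ht.2
    nlinarith
  have dL : ∀ t, HasDerivAt (fun t => σ * Real.exp (-((Λ + 1) * t)))
      (-(Λ + 1) * (σ * Real.exp (-((Λ + 1) * t)))) t := by
    intro t
    have e : HasDerivAt (fun t => Real.exp (-((Λ + 1) * t)))
        (Real.exp (-((Λ + 1) * t)) * (-((Λ + 1) * 1))) t :=
      (((hasDerivAt_id t).const_mul (Λ + 1)).neg).exp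
    exact HasDerivAt.congr_deriv (e.const_mul σ) (by ring)
  have dS : ∀ t ∈ Icc 0 T, HasDerivAt (fun t => gb t + gc t - 2 * ga t)
      (f t (gb t) + f t (gc t) - 2 * f t (ga t)) t := fun t ht =>
    ((hgb t ht).add (hc t ht)).sub ((ha t ht).const_mul 2)
  have ico : ∀ t ∈ Ico 0 T, t ∈ Icc 0 T := fun t ht => Ico_subset_Icc_self ht
  intro t ht
  have main : σ * Real.exp (-((Λ + 1) * t)) ≤ gb t + gc t - 2 * ga t := by
    refine image_le_of_deriv_right_lt_deriv_boundary' (a := 0) (b := T)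
      (f := fun t => σ * Real.exp (-((Λ + 1) * t))) (B := fun t => gb t + gc t - 2 * ga t)
      (f' := fun t => -(Λ + 1) * (σ * Real.exp (-((Λ + 1) * t))))
      (B' := fun t => f t (gb t) + f t (gc t) - 2 * f t (ga t))
      (fun s hs => (dL s).continuousAt.continuousWithinAt)
      (fun s hs => (dL s).hasDerivWithinAt) (by simpa using hσ)
      (fun s hs => (dS s hs).continuousAt.continuousWithinAt)
      (fun s hs => (dS s (ico s hs)).hasDerivWithinAt) ?_ ht
    intro s hs hcc
    have hs' := ico s hs
    obtain ⟨h1, -, h2⟩ := hb s hs' (gb s) (rb s hs') (ga s) (ra s hs')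
    obtain ⟨-, -, h3⟩ := hb s hs' (gc s) (rc s hs') (ga s) (ra s hs')
    have h2' := (abs_le.1 h2).1
    have h3' := (abs_le.1 h3).1
    have q1 : (gb s - ga s) ^ 2 ≤ η ^ 2 := sq_le_sq.2 ((db s hs').trans (le_abs_self _))
    have q2 : (gc s - ga s) ^ 2 ≤ η ^ 2 := sq_le_sq.2 ((dc s hs').trans (le_abs_self _))
    have q1' : L * (gb s - ga s) ^ 2 ≤ L * η ^ 2 := by gcongr
    have q2' : L * (gc s - ga s) ^ 2 ≤ L * η ^ 2 := by gcongr
    have hB : 2 * L * η ^ 2 < σ * Real.exp (-((Λ + 1) * s)) :=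
      hlt.trans_le (by have := hexp s hs'; gcongr)
    have hB0 : 0 < σ * Real.exp (-((Λ + 1) * s)) := by positivity
    set B := σ * Real.exp (-((Λ + 1) * s))
    have h4 : deriv (f s) (ga s) * (gb s - ga s) + deriv (f s) (ga s) * (gc s - ga s)
        = deriv (f s) (ga s) * B := by rw [hcc]; ring
    have h5 : -Λ * B ≤ deriv (f s) (ga s) * B := by
      have := (abs_le.1 h1).1
      gcongr
    linarith
  exact le_trans (by have := hexp t ht; gcongr) main

lemma joint_cont {U : ℝ → ℝ → ℝ} {x₀ : ℝ}
    (hx : ∀ t x, ContinuousAt (fun y => U y t) x) (ht : ∀ x t, ContinuousAt (U x) t)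
    (hmono : ∀ t, AntitoneOn (fun y => U y t) (Ioi x₀)) :
    ContinuousOn (fun q : ℝ × ℝ => U q.1 q.2) (Ioi x₀ ×ˢ univ) := by
  rintro ⟨x, t⟩ ⟨hxx, -⟩
  have hxx : x₀ < x := hxx
  apply ContinuousAt.continuousWithinAt
  rw [Metric.continuousAt_iff']
  intro e he
  have h1 := Metric.continuousAt_iff'.1 (hx t x) (e / 2) (by positivity)
  obtain ⟨r, hr, hball⟩ := Metric.eventually_nhds_iff.1 h1
  set d := min r (x - x₀) / 2 with hd
  have hmin : 0 < min r (x - x₀) := lt_min hr (by linarith)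
  have hd0 : 0 < d := by positivity
  have hdr : d < r := by have := min_le_left r (x - x₀); linarith
  have hdx : d < x - x₀ := by have := min_le_right r (x - x₀); linarith
  have hp := hball (y := x + d) (by simp [abs_of_pos hd0, hdr])
  have hm := hball (y := x - d) (by simp [abs_of_pos hd0, hdr])
  have tp := Metric.continuousAt_iff'.1 (ht (x + d) t) (e / 2) (by positivity)
  have tm := Metric.continuousAt_iff'.1 (ht (x - d) t) (e / 2) (by positivity)
  have hxd : ∀ᶠ y in 𝓝 x, y ∈ Ioo (x - d) (x + d) :=
    Ioo_mem_nhds (by linarith) (by linarith)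
  rw [nhds_prod_eq]
  filter_upwards [hxd.prod_mk (tp.and tm)] with q hq
  obtain ⟨hq1, hq2, hq3⟩ := hq
  rw [Real.dist_eq, abs_lt] at *
  have m1 := hmono q.2 (show x₀ < q.1 by linarith [hq1.1]) (show x₀ < x + d by linarith) hq1.2.le
  have m2 := hmono q.2 (show x₀ < x - d by linarith) (show x₀ < q.1 by linarith [hq1.1]) hq1.1.le
  simp only at m1 m2
  constructor <;> linarith [hp.1, hm.2, hq2.1, hq3.2]

set_option maxHeartbeats 1000000 in
/-- The barrier: `U` stays above `h(t; p0 + δ ((X+R-x)/R)^2)`. -/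
lemma barrier {f U h : ℝ → ℝ → ℝ} {T K Λ L X R δ p0 : ℝ} (hT : 0 < T) (hR : 0 < R) (hδ : 0 < δ)
    (hΛ : 0 ≤ Λ) (hL : 0 ≤ L)
    (hb : ∀ t ∈ Icc 0 T, ∀ v ∈ Icc 0 K, ∀ w ∈ Icc 0 K,
      |deriv (f t) w| ≤ Λ ∧ |f t v - f t w| ≤ Λ * |v - w| ∧
      |f t v - f t w - deriv (f t) w * (v - w)| ≤ L * (v - w) ^ 2)
    {E : ℝ} (hE : 0 < E) (hsmall : 9 * L * E ^ 2 * δ < Real.exp (-((Λ + 1) * T)))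
    (hode : ∀ a ∈ Icc p0 (p0 + δ), ODESolOn f (h a) (Icc 0 T))
    (h0 : ∀ a ∈ Icc p0 (p0 + δ), h a 0 = a) (hTT : ∀ a ∈ Icc p0 (p0 + δ), a ≤ h a T)
    (hrange : ∀ a ∈ Icc p0 (p0 + δ), ∀ t ∈ Icc 0 T, h a t ∈ Icc 0 K)
    (hmono : ∀ a ∈ Icc p0 (p0 + δ), ∀ b ∈ Icc p0 (p0 + δ), a ≤ b → ∀ t ∈ Icc 0 T,
      h a t ≤ h b t ∧ h b t ≤ h a t + (b - a) * E)
    (hU : EntireSol f U) (hUper : ∀ x, U x T = U x 0)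
    (hUc : ContinuousOn (fun q : ℝ × ℝ => U q.1 q.2) (Icc X (X + R) ×ˢ Icc 0 T))
    (hleft : ∀ t ∈ Icc 0 T, h (p0 + δ) t < U X t)
    (hlow : ∀ x ∈ Icc X (X + R), ∀ t ∈ Icc 0 T, h p0 t < U x t) :
    ∀ x ∈ Icc X (X + R), ∀ t ∈ Icc 0 T, h (p0 + 1 * (δ * ((X + R - x) / R) ^ 2)) t < U x t := by
  have hUd : ∀ t, Differentiable ℝ (fun y => U y t) := fun t x =>
    (hU x (mem_univ _) t (mem_univ _)).1
  -- continuity of the flow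
  have hcont : ContinuousOn (fun q : ℝ × ℝ => h q.1 q.2) (Icc p0 (p0 + δ) ×ˢ Icc 0 T) := by
    rintro ⟨a, t⟩ ⟨ha, ht⟩
    rw [Metric.continuousWithinAt_iff']
    intro e he
    have ct := Metric.continuousAt_iff'.1 (hode a ha t ht).continuousAt (e / 2) (by positivity)
    have ca : ∀ᶠ b in 𝓝 a, dist b a < e / 2 / E := Metric.ball_mem_nhds a (by positivity)
    have := (ca.prod_mk ct)
    rw [← nhds_prod_eq] at this
    filter_upwards [nhdsWithin_le_nhds this, self_mem_nhdsWithin] with q hq hqs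
    obtain ⟨hq1, hq2⟩ := hq
    obtain ⟨hs1, hs2⟩ := hqs
    rw [Real.dist_eq] at *
    rw [lt_div_iff₀ hE] at hq1
    have key : |h q.1 q.2 - h a q.2| ≤ |q.1 - a| * E := by
      rcases le_total q.1 a with hle | hle
      · have := hmono q.1 hs1 a ha hle q.2 hs2
        rw [abs_of_nonpos (by linarith), abs_of_nonpos (by linarith)]; linarith
      · have := hmono a ha q.1 hs1 hle q.2 hs2
        rw [abs_of_nonneg (by linarith), abs_of_nonneg (by linarith)]; linarith
    have := abs_sub_le (h q.1 q.2) (h a q.2) (h a t)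
    linarith
  set Z : ℝ → ℝ → ℝ := fun θ x => p0 + θ * (δ * ((X + R - x) / R) ^ 2) with hZ
  have hq01 : ∀ x ∈ Icc X (X + R), 0 ≤ (X + R - x) / R ∧ (X + R - x) / R ≤ 1 := by
    intro x hx
    exact ⟨div_nonneg (by linarith [hx.2]) hR.le, (div_le_one hR).2 (by linarith [hx.1])⟩
  have hq2 : ∀ x ∈ Icc X (X + R), 0 ≤ ((X + R - x) / R) ^ 2 ∧ ((X + R - x) / R) ^ 2 ≤ 1 :=
    fun x hx => ⟨sq_nonneg _, pow_le_one₀ (hq01 x hx).1 (hq01 x hx).2⟩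
  have hZm : ∀ θ ∈ Icc (0:ℝ) 1, ∀ x ∈ Icc X (X + R), Z θ x ∈ Icc p0 (p0 + δ) := by
    intro θ hθ x hx
    have := hq2 x hx
    have h1 : 0 ≤ δ * ((X + R - x) / R) ^ 2 := mul_nonneg hδ.le this.1
    have h2 : δ * ((X + R - x) / R) ^ 2 ≤ δ := by nlinarith
    have h3 : 0 ≤ θ * (δ * ((X + R - x) / R) ^ 2) := mul_nonneg hθ.1 h1
    have h4 : θ * (δ * ((X + R - x) / R) ^ 2) ≤ δ * ((X + R - x) / R) ^ 2 :=
      mul_le_of_le_one_left h1 hθ.2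
    exact ⟨by simp only [hZ]; linarith, by simp only [hZ]; linarith⟩
  set Q : Set (ℝ × ℝ × ℝ) := Icc X (X + R) ×ˢ Icc 0 T ×ˢ Icc (0:ℝ) 1 with hQ
  set D : ℝ × ℝ × ℝ → ℝ := fun q => U q.1 q.2.1 - h (Z q.2.2 q.1) q.2.1 with hD
  have hDc : ContinuousOn D Q := by
    apply ContinuousOn.sub
    · exact hUc.comp (f := fun q : ℝ × ℝ × ℝ => (q.1, q.2.1)) (by fun_prop)
        (fun q hq => ⟨hq.1, hq.2.1⟩)
    · exact hcont.comp (f := fun q : ℝ × ℝ × ℝ => (Z q.2.2 q.1, q.2.1)) (by fun_prop)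
        (fun q hq => ⟨hZm _ hq.2.2 _ hq.1, hq.2.1⟩)
  have hQc : IsCompact Q := isCompact_Icc.prod (isCompact_Icc.prod isCompact_Icc)
  have hKc : IsCompact (Q ∩ D ⁻¹' Iic 0) :=
    hQc.of_isClosed_subset (hDc.preimage_isClosed_of_isClosed hQc.isClosed isClosed_Iic)
      inter_subset_left
  by_contra! hcon
  obtain ⟨xx, hxx, tt, htt, hle⟩ := hcon
  have hne : (Q ∩ D ⁻¹' Iic 0).Nonempty :=
    ⟨(xx, tt, 1), ⟨hxx, htt, by simp⟩, by simp only [hD, hZ, mem_preimage, mem_Iic]; linarith⟩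
  obtain ⟨⟨x1, t0, θ⟩, ⟨⟨hx1, ht0, hθ⟩, hc0⟩, hmin⟩ :=
    hKc.exists_isMinOn hne (f := fun q : ℝ × ℝ × ℝ => q.2.2) (by fun_prop)
  simp only at hx1 ht0 hθ
  have hc0 : U x1 t0 ≤ h (Z θ x1) t0 := by
    have : U x1 t0 - h (Z θ x1) t0 ≤ 0 := hc0
    linarith
  have hθ0 : 0 < θ := by
    rcases hθ.1.lt_or_eq with h' | h'
    · exact h'
    · have := hlow x1 hx1 t0 ht0
      simp only [hZ, ← h', zero_mul, add_zero] at hc0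
      linarith
  -- everywhere above
  have habove : ∀ x ∈ Icc X (X + R), ∀ t ∈ Icc 0 T, h (Z θ x) t ≤ U x t := by
    intro x hx t ht
    have c1 : ContinuousOn (fun s => D (x, t, s)) (Icc 0 1) :=
      hDc.comp (f := fun s : ℝ => (x, t, s)) (by fun_prop) (fun s hs => ⟨hx, ht, hs⟩)
    have c2 : Tendsto (fun s => D (x, t, s)) (𝓝[Ico 0 θ] θ) (𝓝 (D (x, t, θ))) :=
      (c1 θ hθ).mono (fun s hs => ⟨hs.1, hs.2.le.trans hθ.2⟩)
    have : (𝓝[Ico 0 θ] θ).NeBot := by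
      rw [← mem_closure_iff_nhdsWithin_neBot, closure_Ico hθ0.ne]
      exact ⟨hθ0.le, le_rfl⟩
    have : 0 ≤ D (x, t, θ) := by
      apply ge_of_tendsto c2
      filter_upwards [self_mem_nhdsWithin] with s hs
      by_contra! hneg
      have := hmin (a := (x, t, s)) ⟨⟨hx, ht, hs.1, hs.2.le.trans hθ.2⟩, hneg.le⟩
      have h3 : θ ≤ s := this
      linarith [hs.2]
    have : 0 ≤ U x t - h (Z θ x) t := this
    linarith
  set a := Z θ x1 with ha
  have ham : a ∈ Icc p0 (p0 + δ) := hZm θ hθ x1 hx1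
  -- contact at a positive time
  obtain ⟨t1, ht1, ht1p, hc1⟩ : ∃ t1 ∈ Icc 0 T, 0 < t1 ∧ U x1 t1 ≤ h a t1 := by
    rcases ht0.1.lt_or_eq with h' | h'
    · exact ⟨t0, ht0, h', hc0⟩
    · refine ⟨T, ⟨hT.le, le_rfl⟩, hT, ?_⟩
      rw [← h', h0 a ham] at hc0
      rw [hUper]
      exact hc0.trans (hTT a ham)
  have hceq : U x1 t1 = h a t1 := le_antisymm hc1 (habove x1 hx1 t1 ht1)
  -- interior contact
  have hxl : X < x1 := by
    rcases hx1.1.lt_or_eq with h' | h'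
    · exact h'
    · have h2 := hleft t1 ht1
      have h3 := hmono a ham (p0 + δ) ⟨by linarith, le_rfl⟩ ham.2 t1 ht1
      rw [h'] at h2
      linarith [h3.1]
  have hxr : x1 < X + R := by
    rcases hx1.2.lt_or_eq with h' | h'
    · exact h'
    · have h2 := hlow x1 hx1 t1 ht1
      have : a = p0 := by simp [ha, hZ, h']
      rw [this] at hc1
      linarith
  obtain ⟨-, hdd, htd⟩ := hU x1 (mem_univ _) t1 (mem_univ _)
  -- time derivative
  have htime : deriv (deriv fun y => U y t1) x1 ≤ 0 := by
    have hd := htd.sub (hode a ham t1 ht1)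
    rw [hceq] at hd
    have h3 : Tendsto (slope (fun s => U x1 s - h a s) t1) (𝓝[<] t1)
        (𝓝 (deriv (deriv fun y => U y t1) x1 + f t1 (h a t1) - f t1 (h a t1))) :=
      (hasDerivAt_iff_tendsto_slope.1 hd).mono_left
        (nhdsWithin_mono _ (fun y (hy : y < t1) => (ne_of_lt hy : y ≠ t1)))
    have h4 := le_of_tendsto h3 (b := 0) (by
      have : Ioo 0 t1 ∈ 𝓝[<] t1 := Ioo_mem_nhdsLT ht1p
      filter_upwards [this] with s hs
      rw [slope_def_field]
      apply div_nonpos_of_nonneg_of_nonpos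
      · have := habove x1 hx1 s ⟨hs.1.le, hs.2.le.trans ht1.2⟩
        rw [hceq]; linarith
      · linarith [hs.2])
    linarith
  -- space derivative
  set c := 2 * θ * δ / R ^ 2 * Real.exp (-((Λ + 1) * T)) with hcdef
  have hcpos : 0 < c := by positivity
  have hspace : c ≤ deriv (deriv fun y => U y t1) x1 := by
    refine second_diff (hUd t1) x1 hdd c (min (x1 - X) (X + R - x1))
      (lt_min (by linarith) (by linarith)) ?_
    intro d hd0 hdr
    have hdl : d < x1 - X := hdr.trans_le (min_le_left _ _)
    have hdr' : d < X + R - x1 := hdr.trans_le (min_le_right _ _)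
    have hmp : x1 + d ∈ Icc X (X + R) := ⟨by linarith, by linarith⟩
    have hmm : x1 - d ∈ Icc X (X + R) := ⟨by linarith, by linarith⟩
    have hbm := hZm θ hθ _ hmp
    have hcm := hZm θ hθ _ hmm
    set b := Z θ (x1 + d) with hbdef
    set cc := Z θ (x1 - d) with hccdef
    set k := θ * δ / R ^ 2 with hk
    have hkpos : 0 < k := by positivity
    have eb : a - b = k * (2 * d * (X + R - x1) - d ^ 2) := by
      simp only [ha, hbdef, hZ, hk]; field_simp; ring
    have ec : cc - a = k * (2 * d * (X + R - x1) + d ^ 2) := by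
      simp only [ha, hccdef, hZ, hk]; field_simp; ring
    have hba : b ≤ a := by
      have : 0 ≤ k * (2 * d * (X + R - x1) - d ^ 2) :=
        mul_nonneg hkpos.le (by nlinarith)
      linarith
    have hac : a ≤ cc := by
      have : 0 ≤ k * (2 * d * (X + R - x1) + d ^ 2) :=
        mul_nonneg hkpos.le (by nlinarith)
      linarith
    have hbac : a - b ≤ cc - a := by
      rw [eb, ec]; apply mul_le_mul_of_nonneg_left _ hkpos.le; nlinarith
    have hcale : cc - a ≤ k * (3 * d * R) := by
      rw [ec]; apply mul_le_mul_of_nonneg_left _ hkpos.le; nlinarith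
    have hs := ode_second (σ := 2 * k * d ^ 2) (η := k * (3 * d * R) * E) hΛ hL hb
      (hode a ham) (hode b hbm) (hode cc hcm)
      (hrange a ham) (hrange b hbm) (hrange cc hcm)
      (by
        intro t ht
        have := hmono b hbm a ham hba t ht
        rw [abs_of_nonpos (by linarith)]
        have h5 : (a - b) * E ≤ k * (3 * d * R) * E := by
          apply mul_le_mul_of_nonneg_right _ hE.le; linarith
        linarith)
      (by
        intro t ht
        have := hmono a ham cc hcm hac t ht
        rw [abs_of_nonneg (by linarith)]
        have h5 : (cc - a) * E ≤ k * (3 * d * R) * E := by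
          apply mul_le_mul_of_nonneg_right _ hE.le; linarith
        linarith)
      (by
        rw [h0 a ham, h0 b hbm, h0 cc hcm]
        have : b + cc - 2 * a = 2 * k * d ^ 2 := by
          have : b + cc - 2 * a = (cc - a) - (a - b) := by ring
          rw [this, eb, ec]; ring
        linarith)
      (by positivity)
      (by
        have e1 : 2 * L * (k * (3 * d * R) * E) ^ 2
            = 2 * k * d ^ 2 * (9 * L * E ^ 2 * (k * R ^ 2)) := by ring
        have e2 : k * R ^ 2 = θ * δ := by simp only [hk]; field_simp
        have e3 : θ * δ ≤ δ := mul_le_of_le_one_left hδ.le hθ.2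
        rw [e1, e2]
        apply mul_lt_mul_of_pos_left _ (by positivity)
        refine lt_of_le_of_lt ?_ hsmall
        exact mul_le_mul_of_nonneg_left e3 (by positivity)) t1 ht1
    have u1 := habove _ hmp t1 ht1
    have u2 := habove _ hmm t1 ht1
    rw [hceq]
    have e4 : c * d ^ 2 = 2 * k * d ^ 2 * Real.exp (-((Λ + 1) * T)) := by
      simp only [hcdef, hk]; ring
    rw [e4]
    linarith
  linarith

theorem base_not_in_YPer
    (T : ℝ) (hT : 0 < T) (f : ℝ → ℝ → ℝ)
    (hf_cont : Continuous fun q : ℝ × ℝ => f q.1 q.2)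
    (hf_C1 : ∀ t, ContDiff ℝ 1 (f t))
    (hfT : ∀ t v : ℝ, 0 ≤ v → f (t + T) v = f t v)
    (hfLip : ∀ K : ℝ, ∃ L : ℝ, ∀ t : ℝ, ∀ v ∈ Set.Icc (0:ℝ) K, ∀ w ∈ Set.Icc (0:ℝ) K,
      |deriv (f t) v - deriv (f t) w| ≤ L * |v - w|)
    (p : ℝ → ℝ) (hp : XPer T f p)
    (x₀ : ℝ) (U : ℝ → ℝ → ℝ)
    (hU : EntireSol f U) (hUper : TPer T U) (hUsym : SymDecr U x₀)
    (hUpos : ∀ x t, 0 ≤ U x t) (hUbdd : ∃ C, ∀ x t, |U x t| ≤ C)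
    (hUbase : HasBase U p) :
    ∀ ε > (0:ℝ), ∃ a ∈ Set.Ioo (p 0) (p 0 + ε),
      ∀ g : ℝ → ℝ, ODESolOn f g (Set.Icc 0 T) → g 0 = a → g T < a := by
  intro ε hε
  by_contra! hcon
  obtain ⟨hp0, hpT, hpode⟩ := hp
  have hpode' : ODESolOn f p (Icc 0 T) := fun t _ => hpode t (mem_univ _)
  have hpc : Continuous p := continuous_iff_continuousAt.2
    fun t => (hpode t (mem_univ _)).continuousAt
  have T0 : (0:ℝ) ∈ Icc 0 T := ⟨le_rfl, hT.le⟩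
  obtain ⟨Kp, hKp⟩ := (isCompact_Icc (a := (0:ℝ)) (b := T)).exists_bound_of_continuousOn
    hpc.continuousOn
  have hKp' : ∀ t ∈ Icc 0 T, p t ≤ Kp := fun t ht => (le_abs_self _).trans (hKp t ht)
  have hKp0 : 0 ≤ Kp := (hp0 0).trans (hKp' 0 T0)
  obtain ⟨L₀, hL₀⟩ := hfLip (Kp + 2)
  obtain ⟨Λ, L, hΛ, hL, hb⟩ := f_bounds (T := T) hf_cont hf_C1 (by linarith : 0 < Kp + 2) hL₀
  have hLip : ∀ t ∈ Icc 0 T, ∀ v ∈ Icc 0 (Kp + 2), ∀ w ∈ Icc 0 (Kp + 2),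
      |f t v - f t w| ≤ Λ * |v - w| := fun t ht v hv w hw => (hb t ht v hv w hw).2.1
  set E := Real.exp ((Λ + 1) * T) with hE
  have hEpos : 0 < E := Real.exp_pos _
  have hEt : ∀ t ∈ Icc 0 T, Real.exp ((Λ + 1) * t) ≤ E := by
    intro t ht
    apply Real.exp_le_exp.2
    have := ht.2
    gcongr
  set δ₀ := min (ε / 2) (1 / E) with hδ₀
  have hδ₀E : δ₀ * E ≤ 1 := by
    have : δ₀ ≤ 1 / E := min_le_right _ _
    rwa [le_div_iff₀ hEpos] at this
  have hδ₀ε : δ₀ < ε := (min_le_left _ _).trans_lt (by linarith)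
  have hδ₀pos : 0 < δ₀ := by positivity
  -- the flow
  have hex : ∀ a : ℝ, ∃ g : ℝ → ℝ, a ∈ Icc (p 0) (p 0 + δ₀) →
      ODESolOn f g (Icc 0 T) ∧ g 0 = a ∧ a ≤ g T ∧
      ∀ t ∈ Icc 0 T, p t ≤ g t ∧ g t ≤ p t + (a - p 0) * E := by
    intro a
    by_cases ha : a ∈ Icc (p 0) (p 0 + δ₀)
    swap
    · exact ⟨0, fun h => absurd h ha⟩
    rcases ha.1.lt_or_eq with h' | h'
    · obtain ⟨g, hg, hg0, hgT⟩ := hcon a ⟨h', by linarith [ha.2]⟩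
      refine ⟨g, fun _ => ⟨hg, hg0, hgT, ?_⟩⟩
      have hle : (a - p 0) * E ≤ 1 := by
        refine le_trans ?_ hδ₀E
        have := ha.2
        apply mul_le_mul_of_nonneg_right _ hEpos.le
        linarith
      have hf := ode_fence hΛ hLip hpode' hg (by rw [hg0]; exact h') (fun t _ => hp0 t)
        (fun t ht => by rw [hg0]; linarith [hKp' t ht])
      rw [hg0] at hf
      intro t ht
      obtain ⟨h1, h2⟩ := hf t ht
      constructor
      · have : 0 ≤ (a - p 0) * Real.exp (-((Λ + 1) * t)) :=
          mul_nonneg (by linarith) (Real.exp_pos _).le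
        linarith
      · have : (a - p 0) * Real.exp ((Λ + 1) * t) ≤ (a - p 0) * E :=
          mul_le_mul_of_nonneg_left (hEt t ht) (by linarith)
        linarith
    · refine ⟨p, fun _ => ⟨hpode', h', ?_, ?_⟩⟩
      · have := hpT 0
        rw [zero_add] at this
        rw [this, h']
      · intro t ht; simp [h']
  choose h hh using hex
  have hp1 : ∀ a ∈ Icc (p 0) (p 0 + δ₀), ∀ t ∈ Icc 0 T, h a t ≤ p t + 1 := by
    intro a ha t ht
    have h1 := ((hh a ha).2.2.2 t ht).2
    have : (a - p 0) * E ≤ δ₀ * E :=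
      mul_le_mul_of_nonneg_right (by linarith [ha.2]) hEpos.le
    linarith
  have hmono : ∀ a ∈ Icc (p 0) (p 0 + δ₀), ∀ b ∈ Icc (p 0) (p 0 + δ₀), a ≤ b → ∀ t ∈ Icc 0 T,
      h a t ≤ h b t ∧ h b t ≤ h a t + (b - a) * E := by
    intro a ha b hb' hab t ht
    rcases hab.lt_or_eq with h' | h'
    · obtain ⟨oa, a0, -, ab⟩ := hh a ha
      obtain ⟨ob, b0, -, bb⟩ := hh b hb'
      have hle : (b - a) * E ≤ δ₀ * E :=
        mul_le_mul_of_nonneg_right (by linarith [ha.1, hb'.2]) hEpos.le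
      have hf := ode_fence hΛ hLip oa ob (by rw [a0, b0]; exact h')
        (fun t ht => (hp0 t).trans (ab t ht).1)
        (fun t ht => by rw [a0, b0]; linarith [hKp' t ht, hp1 a ha t ht])
      rw [a0, b0] at hf
      obtain ⟨h1, h2⟩ := hf t ht
      constructor
      · have : 0 ≤ (b - a) * Real.exp (-((Λ + 1) * t)) :=
          mul_nonneg (by linarith) (Real.exp_pos _).le
        linarith
      · have : (b - a) * Real.exp ((Λ + 1) * t) ≤ (b - a) * E :=
          mul_le_mul_of_nonneg_left (hEt t ht) (by linarith)
        linarith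
    · simp [h']
  have hUx : ∀ t, Differentiable ℝ (fun y => U y t) := fun t x =>
    (hU x (mem_univ _) t (mem_univ _)).1
  have hUt : ∀ x t, ContinuousAt (U x) t := fun x t =>
    (hU x (mem_univ _) t (mem_univ _)).2.2.continuousAt
  have hanti : ∀ t, StrictAntiOn (fun y => U y t) (Ioi x₀) := by
    intro t
    apply strictAntiOn_of_deriv_neg (convex_Ioi x₀) (hUx t).continuous.continuousOn
    intro x hx
    rw [interior_Ioi] at hx
    exact hUsym.2 x t hx
  have hUcont := joint_cont (x₀ := x₀) (fun t x => (hUx t x).continuousAt) hUt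
    (fun t => (hanti t).antitoneOn)
  have hUp : ∀ x t, x₀ < x → p t < U x t := by
    intro x t hx
    have h1 : p t ≤ U (x + 1) t := by
      apply le_of_tendsto (hUbase t).1
      filter_upwards [eventually_ge_atTop (x + 1)] with y hy
      exact (hanti t).antitoneOn (show x₀ < x + 1 by linarith) (show x₀ < y by linarith) hy
    have h2 := hanti t hx (show x₀ < x + 1 by linarith) (by linarith : x < x + 1)
    exact h1.trans_lt h2
  set X := x₀ + 1 with hX
  obtain ⟨tm, htm, hm⟩ := (isCompact_Icc (a := (0:ℝ)) (b := T)).exists_isMinOn ⟨0, T0⟩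
    (f := fun t => U X t - p t)
    (fun t _ => ((hUt X t).sub hpc.continuousAt).continuousWithinAt)
  set m := U X tm - p tm with hmdef
  have hmpos : 0 < m := by have := hUp X tm (by linarith); linarith
  have hm' : ∀ t ∈ Icc 0 T, m ≤ U X t - p t := fun t ht => hm ht
  -- choice of δ
  set e := Real.exp (-((Λ + 1) * T)) with he
  have hepos : 0 < e := Real.exp_pos _
  set δ := min δ₀ (min (m / (2 * E)) (e / (9 * L * E ^ 2 + 1) / 2)) with hδ
  have hq : 0 < 9 * L * E ^ 2 + 1 := by positivity
  have hδpos : 0 < δ := by positivity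
  have hδ1 : δ ≤ δ₀ := min_le_left _ _
  have hδ2 : δ * E < m := by
    have : δ ≤ m / (2 * E) := (min_le_right _ _).trans (min_le_left _ _)
    rw [le_div_iff₀ (by positivity)] at this
    linarith
  have hδ3 : 9 * L * E ^ 2 * δ < e := by
    have : δ ≤ e / (9 * L * E ^ 2 + 1) / 2 := (min_le_right _ _).trans (min_le_right _ _)
    rw [div_div, le_div_iff₀ (by positivity)] at this
    have : 0 ≤ 9 * L * E ^ 2 * δ := by positivity
    linarith
  have hsub : ∀ a ∈ Icc (p 0) (p 0 + δ), a ∈ Icc (p 0) (p 0 + δ₀) :=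
    fun a ha => ⟨ha.1, by linarith [ha.2]⟩
  have hbar : ∀ R, 0 < R → ∀ x ∈ Icc X (X + R), ∀ t ∈ Icc 0 T,
      h (p 0 + 1 * (δ * ((X + R - x) / R) ^ 2)) t < U x t := by
    intro R hR
    refine barrier (E := E) hT hR hδpos hΛ hL hb hEpos hδ3
      (fun a ha => (hh a (hsub a ha)).1) (fun a ha => (hh a (hsub a ha)).2.1)
      (fun a ha => (hh a (hsub a ha)).2.2.1) ?_
      (fun a ha b hb' => hmono a (hsub a ha) b (hsub b hb')) hU ?_ ?_ ?_ ?_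
    · intro a ha t ht
      have h1 := ((hh a (hsub a ha)).2.2.2 t ht).1
      have h2 := hp1 a (hsub a ha) t ht
      exact ⟨(hp0 t).trans h1, by linarith [hKp' t ht]⟩
    · intro x
      have := hUper x 0
      rwa [zero_add] at this
    · exact hUcont.mono (fun q hq => ⟨show x₀ < q.1 by linarith [hq.1.1], mem_univ _⟩)
    · intro t ht
      have h1 := ((hh (p 0 + δ) (hsub _ ⟨by linarith, le_rfl⟩)).2.2.2 t ht).2
      have h2 := hm' t ht
      rw [add_sub_cancel_left] at h1
      linarith
    · intro x hx t ht
      have h1 := ((hh (p 0) (hsub _ ⟨le_rfl, by linarith⟩)).2.2.2 t ht).2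
      rw [sub_self, zero_mul, add_zero] at h1
      exact h1.trans_lt (hUp x t (by linarith [hx.1]))
  have hlow : ∀ x, X ≤ x → p 0 + δ ≤ U x 0 := by
    intro x hx
    have hlim : Tendsto (fun R : ℝ => p 0 + 1 * (δ * ((X + R - x) / R) ^ 2)) atTop
        (𝓝 (p 0 + 1 * (δ * (1 + (X - x) * 0) ^ 2))) := by
      have h1 : Tendsto (fun R : ℝ => p 0 + 1 * (δ * (1 + (X - x) * R⁻¹) ^ 2)) atTop
          (𝓝 (p 0 + 1 * (δ * (1 + (X - x) * 0) ^ 2))) :=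
        ((((tendsto_inv_atTop_zero.const_mul (X - x)).const_add 1).pow 2).const_mul
          δ |>.const_mul 1).const_add (p 0)
      refine h1.congr' ?_
      filter_upwards [eventually_gt_atTop 0] with R hR
      have : (X + R - x) / R = 1 + (X - x) * R⁻¹ := by field_simp; ring
      rw [this]
    have h2 := le_of_tendsto hlim (b := U x 0) (by
      filter_upwards [eventually_gt_atTop 0, eventually_ge_atTop (x - X)] with R hR hR2
      have hxm : x ∈ Icc X (X + R) := ⟨hx, by linarith⟩
      have h3 := hbar R hR x hxm 0 T0
      have hq0 : 0 ≤ (X + R - x) / R := div_nonneg (by linarith) hR.le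
      have hq1 : (X + R - x) / R ≤ 1 := (div_le_one hR).2 (by linarith)
      have hq2 : ((X + R - x) / R) ^ 2 ≤ 1 := pow_le_one₀ hq0 hq1
      have hq3 : 0 ≤ ((X + R - x) / R) ^ 2 := sq_nonneg _
      rw [(hh _ (hsub _ ⟨by nlinarith, by nlinarith⟩)).2.1] at h3
      exact h3.le)
    simpa using h2
  have hfin : p 0 + δ ≤ p 0 := by
    apply ge_of_tendsto (hUbase 0).1
    filter_upwards [eventually_ge_atTop X] with x hx
    exact hlow x hx
  linarith
end
end

section
/- Let p₋ < p₊ be two elements of X_per such that for each a ∈ (p₋(0), p₊(0)), the sequence m ↦ h(t+mT; a) is increasing in m and converges to p₊(t) as m → ∞ locally uniformly in t ∈ ℝ. Then there exists a smooth function g : [p₋(0), p₊(0)] → [0,∞) with g(p₋(0)) = g(p₊(0)) = 0 such that for every a ∈ (p₋(0), p₊(0)): g(a) > 0 and h(T; a; g(a)) > a, where h(t; a; ε) denotes the solution of the perturbed ODE h_t = f(t,h) − ε with h(0) = a. -/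
open Filter Topology Set MeasureTheory

noncomputable section

lemma approx_sol (F : ℝ → ℝ → ℝ) (hFc : Continuous fun q : ℝ × ℝ => F q.1 q.2) (M : ℝ)
    (hFM : ∀ t u, |F t u| ≤ M)
    (hFu : ∀ ε > 0, ∃ δ > 0, ∀ t u v, |u - v| ≤ δ → |F t u - F t v| ≤ ε)
    (a c R : ℝ) (hc : 0 < c) (hR : 0 < R) :
    ∃ h d : ℝ → ℝ, h 0 = a ∧ ∀ t ∈ Ioo (-R) R, HasDerivAt h (d t) t ∧
      d t ≤ F t (h t) - c ∧ F t (h t) - 3 * c ≤ d t := by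
  obtain ⟨δ, hδ, hu⟩ := hFu c hc
  have hM : 0 ≤ M := (abs_nonneg _).trans (hFM 0 0)
  have hcu : ∀ t, Continuous (F t) := fun t =>
    hFc.comp (continuous_const.prodMk continuous_id)
  have hii : ∀ t x y, IntervalIntegrable (F t) volume x y := fun t x y =>
    (hcu t).intervalIntegrable x y
  let G : ℝ → ℝ → ℝ := fun t u => δ⁻¹ * (∫ s in u..(u + δ), F t s) - 2 * c
  have hG1 : ∀ t u, |G t u - (F t u - 2 * c)| ≤ c := by
    intro t u
    have h1 : G t u - (F t u - 2 * c) = δ⁻¹ * ∫ s in u..(u + δ), (F t s - F t u) := by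
      rw [intervalIntegral.integral_sub (hii _ _ _) (by simp)]
      simp only [G, intervalIntegral.integral_const, smul_eq_mul]
      field_simp
      ring
    have h2 : ‖∫ s in u..(u + δ), (F t s - F t u)‖ ≤ c * |u + δ - u| := by
      apply intervalIntegral.norm_integral_le_of_norm_le_const
      intro s hs
      rw [uIoc_of_le (by linarith)] at hs
      apply hu
      rw [abs_of_pos (by linarith [hs.1])]
      linarith [hs.2]
    rw [h1, abs_mul, abs_of_pos (inv_pos.2 hδ)]
    rw [Real.norm_eq_abs, add_sub_cancel_left, abs_of_pos hδ] at h2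
    calc _ ≤ δ⁻¹ * (c * δ) := by gcongr
      _ = c := by field_simp
  have hGb : ∀ t u, ‖G t u‖ ≤ M + 3 * c := by
    intro t u
    have := abs_le.1 (hG1 t u)
    have := abs_le.1 (hFM t u)
    rw [Real.norm_eq_abs, abs_le]
    constructor <;> linarith
  have hGl : ∀ t, LipschitzWith (Real.toNNReal (δ⁻¹ * (2 * M))) (G t) := by
    intro t
    apply LipschitzWith.of_dist_le_mul
    intro u v
    rw [Real.coe_toNNReal _ (by positivity), Real.dist_eq, Real.dist_eq]
    have h1 : G t u - G t v = δ⁻¹ * ((∫ s in (v + δ)..(u + δ), F t s) - ∫ s in v..u, F t s) := by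
      have e1 := intervalIntegral.integral_add_adjacent_intervals (hii t u (v)) (hii t (v) (v + δ))
      have e2 := intervalIntegral.integral_add_adjacent_intervals (hii t u (v + δ)) (hii t (v + δ) (u + δ))
      have e3 := intervalIntegral.integral_symm (μ := volume) (f := F t) v u
      have : (∫ s in u..(u + δ), F t s) - (∫ s in v..(v + δ), F t s) =
        (∫ s in (v + δ)..(u + δ), F t s) - ∫ s in v..u, F t s := by linarith
      simp only [G]
      rw [← this]; ring
    have b1 : ‖∫ s in (v + δ)..(u + δ), F t s‖ ≤ M * |u + δ - (v + δ)| :=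
      intervalIntegral.norm_integral_le_of_norm_le_const fun s _ => hFM t s
    have b2 : ‖∫ s in v..u, F t s‖ ≤ M * |u - v| :=
      intervalIntegral.norm_integral_le_of_norm_le_const fun s _ => hFM t s
    rw [add_sub_add_right_eq_sub] at b1
    have b3 := norm_sub_le (∫ s in (v + δ)..(u + δ), F t s) (∫ s in v..u, F t s)
    rw [h1, abs_mul, abs_of_pos (inv_pos.2 hδ), mul_assoc]
    gcongr
    rw [Real.norm_eq_abs] at b3
    linarith
  have hGt : ∀ u, Continuous fun t => G t u := by
    intro u
    have : Continuous fun t => ∫ s in u..(u + δ), F t s :=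
      intervalIntegral.continuous_parametric_intervalIntegral_of_continuous' (f := F) hFc u (u + δ)
    exact (continuous_const.mul this).sub continuous_const
  have h0 : (0:ℝ) ∈ Icc (-R) R := ⟨by linarith, hR.le⟩
  have hP : IsPicardLindelof G (⟨0, h0⟩ : Icc (-R) R) a
      (Real.toNNReal ((M + 3 * c) * R)) 0 (Real.toNNReal (M + 3 * c))
      (Real.toNNReal (δ⁻¹ * (2 * M))) := by
    refine ⟨fun t _ => (hGl t).lipschitzOnWith, fun x _ => (hGt x).continuousOn, fun t _ x _ => ?_, ?_⟩
    · rw [Real.coe_toNNReal _ (by positivity)]; exact hGb t x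
    · rw [Real.coe_toNNReal _ (by positivity), Real.coe_toNNReal _ (by positivity)]
      simp
  obtain ⟨h, ha, hh⟩ := hP.exists_eq_forall_mem_Icc_hasDerivWithinAt₀
  refine ⟨h, fun t => G t (h t), ha, fun t ht => ⟨?_, ?_, ?_⟩⟩
  · exact (hh t (Ioo_subset_Icc_self ht)).hasDerivAt (Icc_mem_nhds ht.1 ht.2)
  · linarith [(abs_le.1 (hG1 t (h t))).2]
  · linarith [(abs_le.1 (hG1 t (h t))).1]

/-- Pointwise limits of approximate solutions are solutions. -/
lemma limit_sol (F : ℝ → ℝ → ℝ) (hFc : Continuous fun q : ℝ × ℝ => F q.1 q.2) (M : ℝ)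
    (hFM : ∀ t u, |F t u| ≤ M) (l : Filter ℕ) [l.NeBot] (hl : l ≤ atTop)
    (h d : ℕ → ℝ → ℝ) (e : ℕ → ℝ) (he : Tendsto e atTop (𝓝 0))
    (hd : ∀ n : ℕ, ∀ t ∈ Ioo (-(n + 1 : ℝ)) (n + 1), HasDerivAt (h n) (d n t) t ∧
      |d n t - F t (h n t)| ≤ e n)
    (H : ℝ → ℝ) (hH : ∀ t, Tendsto (fun n => h n t) l (𝓝 (H t))) (t : ℝ) :
    HasDerivAt H (F t (H t)) t := by
  have hM : 0 ≤ M := (abs_nonneg _).trans (hFM 0 0)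
  rw [hasDerivAt_iff_isLittleO, Asymptotics.isLittleO_iff]
  intro ε hε
  have hcont := Metric.continuousAt_iff.1 (hFc.continuousAt (x := (t, H t))) (ε / 2) (by positivity)
  obtain ⟨r, hr, hr'⟩ := hcont
  set ρ := min r (min 1 (r / (2 * (M + 1)))) with hρ
  have hρ0 : 0 < ρ := by positivity
  rw [Metric.eventually_nhds_iff]
  refine ⟨ρ, hρ0, fun s hs => ?_⟩
  have ev1 : ∀ᶠ n in l, |h n t - H t| < r / 2 := by
    have := Metric.tendsto_nhds.1 (hH t) (r / 2) (by positivity)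
    simpa [Real.dist_eq] using this
  have ev2 : ∀ᶠ n in l, e n < min 1 (ε / 2) :=
    hl (he.eventually_lt_const (by positivity))
  have ev3 : ∀ᶠ n : ℕ in l, |t| < n :=
    hl (tendsto_natCast_atTop_atTop.eventually_gt_atTop |t|)
  have key : ∀ᶠ n in l, ‖h n s - h n t - (s - t) * F t (H t)‖ ≤ ε * ‖s - t‖ := by
    filter_upwards [ev1, ev2, ev3] with n h1 h2 h3
    have hsub : Metric.ball t ρ ⊆ Ioo (-(n + 1 : ℝ)) (n + 1) := by
      intro x hx
      rw [Metric.mem_ball, Real.dist_eq] at hx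
      have : ρ ≤ 1 := (min_le_right _ _).trans (min_le_left _ _)
      have := abs_lt.1 hx
      have := abs_lt.1 h3
      constructor <;> linarith
    have hts : t ∈ Metric.ball t ρ := Metric.mem_ball_self hρ0
    have lip : ∀ x ∈ Metric.ball t ρ, |h n x - h n t| ≤ (M + 1) * |x - t| := by
      intro x hx
      refine Convex.norm_image_sub_le_of_norm_hasDerivWithin_le (f' := d n)
        (fun y hy => (hd n y (hsub hy)).1.hasDerivWithinAt) (fun y hy => ?_)
        (convex_ball t ρ) hts hx
      have a1 := abs_le.1 (hd n y (hsub hy)).2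
      have a2 := abs_le.1 (hFM y (h n y))
      have := min_le_left 1 (ε / 2)
      rw [Real.norm_eq_abs, abs_le]
      constructor <;> linarith
    have hder : ∀ y ∈ Metric.ball t ρ, HasDerivWithinAt (fun x => h n x - x * F t (H t))
        (d n y - 1 * F t (H t)) (Metric.ball t ρ) y := fun y hy =>
      ((hd n y (hsub hy)).1.sub ((hasDerivAt_id y).mul_const _)).hasDerivWithinAt
    have := Convex.norm_image_sub_le_of_norm_hasDerivWithin_le (C := ε) hder (fun y hy => ?_)
        (convex_ball t ρ) hts (Metric.mem_ball.2 hs)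
    · have e : h n s - h n t - (s - t) * F t (H t) =
          (h n s - s * F t (H t)) - (h n t - t * F t (H t)) := by ring
      rw [e]
      exact this
    · have a1 := abs_le.1 (hd n y (hsub hy)).2
      have l1 := lip y hy
      rw [Metric.mem_ball, Real.dist_eq] at hy
      have hy2 : |y - t| < r / (2 * (M + 1)) :=
        hy.trans_le ((min_le_right _ _).trans (min_le_right _ _))
      rw [lt_div_iff₀ (by positivity)] at hy2
      have a3 : |h n y - H t| < r := by
        have := abs_sub_le (h n y) (h n t) (H t)
        linarith
      have a2 := @hr' (y, h n y) (by
        rw [Prod.dist_eq, max_lt_iff]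
        exact ⟨by rw [Real.dist_eq]; exact hy.trans_le (min_le_left _ _), by rw [Real.dist_eq]; exact a3⟩)
      rw [Real.dist_eq] at a2
      have a2 := abs_lt.1 a2
      simp only at a2
      have := min_le_right 1 (ε / 2)
      rw [Real.norm_eq_abs, abs_le]
      constructor <;> linarith [a2.1, a2.2]
  have lim : Tendsto (fun n => ‖h n s - h n t - (s - t) * F t (H t)‖) l
      (𝓝 ‖H s - H t - (s - t) * F t (H t)‖) :=
    (((hH s).sub (hH t)).sub_const _).norm
  simpa using le_of_tendsto lim key

lemma exists_sol (F : ℝ → ℝ → ℝ) (hFc : Continuous fun q : ℝ × ℝ => F q.1 q.2) (M : ℝ)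
    (hFM : ∀ t u, |F t u| ≤ M)
    (hFu : ∀ ε > 0, ∃ δ > 0, ∀ t u v, |u - v| ≤ δ → |F t u - F t v| ≤ ε) (a : ℝ) :
    ∃ (h d : ℕ → ℝ → ℝ) (H : ℝ → ℝ) (l : Filter ℕ), l.NeBot ∧ l ≤ atTop ∧
      (∀ n, h n 0 = a) ∧ H 0 = a ∧
      (∀ n : ℕ, ∀ t ∈ Ioo (-(n + 1 : ℝ)) (n + 1), HasDerivAt (h n) (d n t) t ∧
        d n t ≤ F t (h n t) - 1 / ((n : ℝ) + 1)) ∧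
      (∀ t, Tendsto (fun n => h n t) l (𝓝 (H t))) ∧
      ∀ t, HasDerivAt H (F t (H t)) t := by
  have hM : 0 ≤ M := (abs_nonneg _).trans (hFM 0 0)
  have := fun n : ℕ => approx_sol F hFc M hFM hFu a (1 / ((n : ℝ) + 1)) (n + 1)
    (by positivity) (by positivity)
  choose h d h0 hd using this
  have hd' : ∀ n : ℕ, ∀ t ∈ Ioo (-(n + 1 : ℝ)) (n + 1), HasDerivAt (h n) (d n t) t ∧
      |d n t - F t (h n t)| ≤ 3 * (1 / ((n : ℝ) + 1)) := by
    intro n t ht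
    obtain ⟨a1, a2, a3⟩ := hd n t ht
    have : 0 < 1 / ((n : ℝ) + 1) := by positivity
    refine ⟨a1, abs_le.2 ⟨by linarith, by linarith⟩⟩
  have hlim : ∀ t, ∃ x, Tendsto (fun n => h n t) (hyperfilter ℕ : Filter ℕ) (𝓝 x) := by
    intro t
    have hb : ∀ᶠ n : ℕ in (hyperfilter ℕ : Filter ℕ),
        h n t ∈ Icc (a - (M + 3) * |t|) (a + (M + 3) * |t|) := by
      have ev : ∀ᶠ n : ℕ in (hyperfilter ℕ : Filter ℕ), |t| < n :=
        Nat.hyperfilter_le_atTop (tendsto_natCast_atTop_atTop.eventually_gt_atTop |t|)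
      filter_upwards [ev] with n hn
      have htm : t ∈ Ioo (-(n + 1 : ℝ)) (n + 1) := by
        have := abs_lt.1 hn
        constructor <;> linarith
      have h0m : (0:ℝ) ∈ Ioo (-(n + 1 : ℝ)) (n + 1) := by
        have : (0:ℝ) ≤ n := n.cast_nonneg
        constructor <;> linarith
      have := Convex.norm_image_sub_le_of_norm_hasDerivWithin_le (f := h n) (f' := d n) (C := M + 3)
        (fun y hy => (hd n y hy).1.hasDerivWithinAt) (fun y hy => ?_)
        (convex_Ioo _ _) h0m htm
      · rw [h0, sub_zero, Real.norm_eq_abs, Real.norm_eq_abs] at this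
        have := abs_le.1 this
        constructor <;> linarith
      · have a1 := abs_le.1 (hd' n y hy).2
        have a2 := abs_le.1 (hFM y (h n y))
        have : 1 / ((n : ℝ) + 1) ≤ 1 := by
          rw [div_le_one (by positivity)]
          have : (0:ℝ) ≤ n := n.cast_nonneg
          linarith
        rw [Real.norm_eq_abs, abs_le]
        constructor <;> linarith
    obtain ⟨x, _, hx⟩ := isCompact_Icc.ultrafilter_le_nhds ((hyperfilter ℕ).map fun n => h n t)
      (by rw [le_principal_iff]; exact hb)
    exact ⟨x, hx⟩
  choose H hH using hlim
  refine ⟨h, d, H, hyperfilter ℕ, inferInstance, Nat.hyperfilter_le_atTop, h0, ?_,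
    fun n t ht => ⟨(hd n t ht).1, (hd n t ht).2.1⟩, hH, ?_⟩
  · have := hH 0
    simp only [h0] at this
    exact tendsto_nhds_unique this tendsto_const_nhds
  · intro t
    refine limit_sol F hFc M hFM (hyperfilter ℕ : Filter ℕ) Nat.hyperfilter_le_atTop h d _ ?_ hd' H hH t
    simpa using (tendsto_one_div_add_atTop_nhds_zero_nat (𝕜 := ℝ)).const_mul 3

lemma smooth_below (α β : ℝ) (Q : ℝ → ℝ → Prop)
    (hloc : ∀ a₀ ∈ Ioo α β, ∃ δ > 0, ∃ ε₀ > 0, ∀ a ∈ Ioo α β, |a - a₀| < δ →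
      ∀ ε, 0 < ε → ε ≤ ε₀ → Q a ε) :
    ∃ g : ℝ → ℝ, ContDiff ℝ (⊤ : ℕ∞) g ∧ (∀ a, 0 ≤ g a) ∧ (∀ a, a ∉ Ioo α β → g a = 0) ∧
      ∀ a ∈ Ioo α β, 0 < g a ∧ Q a (g a) := by
  let S : Set (ℝ × ℝ) := {q | q.1 ∈ Ioo α β ∧ q.2 ∈ Ioo 0 1 ∧ ∀ ε, 0 < ε → ε ≤ q.2 → Q q.1 ε}
  obtain ⟨Φ, hΦs, hΦc, hΦr⟩ := (isOpen_interior (s := S)).exists_contDiff_support_eq (n := (⊤ : ℕ∞))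
  have hΦ0 : ∀ q, 0 ≤ Φ q := fun q => (hΦr (mem_range_self q)).1
  have hΦ1 : ∀ q, Φ q ≤ 1 := fun q => (hΦr (mem_range_self q)).2
  have hΦS : ∀ q, Φ q ≠ 0 → q ∈ S := fun q hq => interior_subset (hΦs ▸ hq)
  have hsm : ContDiff ℝ (⊤ : ℕ∞) fun a => ∫ e, Φ (a, e) := by
    have := contDiffOn_convolution_right_with_param (𝕜 := ℝ) (μ := (volume : Measure ℝ))
      (n := (⊤ : ℕ∞)) (f := fun _ : ℝ => (1:ℝ)) (ContinuousLinearMap.mul ℝ ℝ)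
      (g := fun a e : ℝ => Φ (a, e)) (s := univ) (k := Icc 0 1) isOpen_univ isCompact_Icc
      (fun a e _ he => by
        by_contra h
        exact he (Ioo_subset_Icc_self (hΦS _ h).2.1))
      (locallyIntegrable_const 1) (hΦc.contDiffOn)
    rw [univ_prod_univ, contDiffOn_univ] at this
    have h2 := this.comp (contDiff_id.prodMk contDiff_const : ContDiff ℝ (⊤ : ℕ∞) fun a : ℝ => (a, (0:ℝ)))
    convert h2 using 2 with a
    simp only [Function.comp, convolution, ContinuousLinearMap.mul_apply', one_mul, id]
    rw [← integral_neg_eq_self]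
    simp
  have hcs : ∀ a, Continuous fun e => Φ (a, e) := fun a =>
    hΦc.continuous.comp (continuous_const.prodMk continuous_id)
  have hsupp : ∀ a, HasCompactSupport fun e => Φ (a, e) := fun a =>
    HasCompactSupport.intro (isCompact_Icc (a := (0:ℝ)) (b := 1)) fun e he => by
      by_contra h
      exact he (Ioo_subset_Icc_self (hΦS _ h).2.1)
  have hint : ∀ a, Integrable fun e => Φ (a, e) := fun a => (hcs a).integrable_of_hasCompactSupport (hsupp a)
  have hpos : ∀ a ∈ Ioo α β, 0 < ∫ e, Φ (a, e) := by
    intro a ha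
    obtain ⟨δ, hδ, ε₀, hε, H⟩ := hloc a ha
    have hin : (a, min ε₀ 1 / 2) ∈ interior S := by
      have hm : 0 < min ε₀ 1 := by positivity
      rw [mem_interior_iff_mem_nhds]
      have n1 : Ioo α β ∩ Metric.ball a δ ∈ 𝓝 a :=
        inter_mem (Ioo_mem_nhds ha.1 ha.2) (Metric.ball_mem_nhds a hδ)
      have n2 : Ioo 0 (min ε₀ 1) ∈ 𝓝 (min ε₀ 1 / 2) := Ioo_mem_nhds (by linarith) (by linarith)
      refine mem_of_superset (prod_mem_nhds n1 n2) ?_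
      rintro ⟨b, e⟩ ⟨⟨hb1, hb2⟩, he1, he2⟩
      simp only at hb1 hb2 he1 he2
      rw [lt_min_iff] at he2
      exact ⟨hb1, ⟨he1, he2.2⟩, fun ε h1 h2 => H b hb1 (by simpa [Real.dist_eq] using hb2) ε h1
        (h2.trans he2.1.le)⟩
    rw [← hΦs] at hin
    exact (hcs a).integral_pos_of_hasCompactSupport_nonneg_nonzero (hsupp a) (fun e => hΦ0 _) hin
  refine ⟨fun a => (∫ e, Φ (a, e)) / 2, hsm.div_const 2, fun a => ?_, fun a ha => ?_, fun a ha => ⟨?_, ?_⟩⟩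
  · have : 0 ≤ ∫ e, Φ (a, e) := integral_nonneg fun e => hΦ0 _
    positivity
  · have : (fun e => Φ (a, e)) = fun _ => 0 := by
      funext e
      by_contra h
      exact ha (hΦS _ h).1
    simp [this]
  · have := hpos a ha
    positivity
  · have hp := hpos a ha
    set I := ∫ e, Φ (a, e) with hI
    by_contra hQ
    have hz : ∀ e, Φ (a, e) ≠ 0 → e ∈ Ioc 0 (I / 2) := by
      intro e he
      have := hΦS _ he
      refine ⟨this.2.1.1, ?_⟩
      by_contra h
      push Not at h
      exact hQ (this.2.2 _ (by positivity) h.le)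
    have e1 : ∫ e in Ioc 0 (I / 2), Φ (a, e) = I :=
      setIntegral_eq_integral_of_forall_compl_eq_zero fun e he => by
        by_contra h
        exact he (hz e h)
    have e2 : ∫ e in Ioc 0 (I / 2), Φ (a, e) ≤ ∫ e in Ioc 0 (I / 2), (1:ℝ) :=
      integral_mono (hint a).integrableOn (by simp) fun e => hΦ1 _
    rw [e1] at e2
    simp at e2
    rcases e2 with e2 | e2 <;> linarith

/-- Comparison with strict inequality of the derivatives at contact points. -/
lemma comparison (u v u' v' : ℝ → ℝ) (s T : ℝ) (hu : ∀ t ∈ Icc s T, HasDerivAt u (u' t) t)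
    (hv : ∀ t ∈ Icc s T, HasDerivAt v (v' t) t) (h0 : u s ≤ v s)
    (hb : ∀ t ∈ Icc s T, u t = v t → u' t < v' t) : ∀ t ∈ Icc s T, u t ≤ v t := by
  intro t ht
  exact image_le_of_deriv_right_lt_deriv_boundary'
    (fun x hx => (hu x hx).continuousAt.continuousWithinAt)
    (fun x hx => (hu x (Ico_subset_Icc_self hx)).hasDerivWithinAt) h0
    (fun x hx => (hv x hx).continuousAt.continuousWithinAt)
    (fun x hx => (hv x (Ico_subset_Icc_self hx)).hasDerivWithinAt)
    (fun x hx => hb x (Ico_subset_Icc_self hx)) ht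

/-- Comparison when the derivatives agree wherever `u > v`. -/
lemma comparison_weak (u v u' v' : ℝ → ℝ) (hu : ∀ t, HasDerivAt u (u' t) t)
    (hv : ∀ t, HasDerivAt v (v' t) t) (h0 : u 0 ≤ v 0)
    (hb : ∀ t, v t < u t → u' t = v' t) : ∀ t, 0 ≤ t → u t ≤ v t := by
  intro t ht
  have key : ∀ ε > 0, u t ≤ v t + ε * (1 + t) := by
    intro ε hε
    refine comparison u (fun x => v x + ε * (1 + x)) u' (fun x => v' x + ε * 1) 0 t
      (fun x _ => hu x) (fun x _ => (hv x).add (((hasDerivAt_id x).const_add 1).const_mul ε)) ?_ ?_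
      t ⟨ht, le_rfl⟩
    · linarith
    · intro x hx hxe
      have : 0 < ε * (1 + x) := mul_pos hε (by linarith [hx.1])
      rw [hb x (by linarith)]
      linarith
  refine le_of_forall_pos_le_add fun ε hε => ?_
  have := key (ε / (1 + t)) (by positivity)
  rwa [div_mul_cancel₀ _ (by positivity)] at this

lemma clamp_lip (p q u v : ℝ) : |max p (min q u) - max p (min q v)| ≤ |u - v| := by
  have h1 := abs_max_sub_max_le_max p (min q u) p (min q v)
  have h2 := abs_min_sub_min_le_max q u q v
  simp at h1 h2
  exact h1.trans h2

theorem perturbation_function_exists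
    (T : ℝ) (hT : 0 < T) (f : ℝ → ℝ → ℝ)
    (hf_cont : Continuous fun q : ℝ × ℝ => f q.1 q.2)
    (hf_C1 : ∀ t, ContDiff ℝ 1 (f t))
    (hfT : ∀ t v : ℝ, 0 ≤ v → f (t + T) v = f t v)
    (pm pp : ℝ → ℝ) (hpm : XPer T f pm) (hpp : XPer T f pp) (hlt : ∀ t, pm t < pp t)
    (hbasin : ∀ a ∈ Set.Ioo (pm 0) (pp 0), ∀ g : ℝ → ℝ,
      ODESolOn f g (Set.Ici 0) → g 0 = a →
        (∀ t : ℝ, 0 ≤ t → StrictMono fun m : ℕ => g (t + (m : ℝ) * T)) ∧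
        TendstoLocallyUniformly (fun (m : ℕ) (t : ℝ) => g (t + (m : ℝ) * T)) pp atTop) :
    ∃ g : ℝ → ℝ, ContDiffOn ℝ (⊤ : ℕ∞) g (Set.Icc (pm 0) (pp 0)) ∧
      (∀ a ∈ Set.Icc (pm 0) (pp 0), 0 ≤ g a) ∧
      g (pm 0) = 0 ∧ g (pp 0) = 0 ∧
      ∀ a ∈ Set.Ioo (pm 0) (pp 0), 0 < g a ∧
        ∀ η : ℝ → ℝ, ODESolOn (fun t v => f t v - g a) η (Set.Icc 0 T) → η 0 = a →
          a < η T := by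
  obtain ⟨hpm0, hpmT, hpmS⟩ := hpm
  obtain ⟨hpp0, hppT, hppS⟩ := hpp
  have hpmd : ∀ t, HasDerivAt pm (f t (pm t)) t := fun t => hpmS t (mem_univ t)
  have hppd : ∀ t, HasDerivAt pp (f t (pp t)) t := fun t => hppS t (mem_univ t)
  have hpmc : Continuous pm := continuous_iff_continuousAt.2 fun t => (hpmd t).continuousAt
  have hppc : Continuous pp := continuous_iff_continuousAt.2 fun t => (hppd t).continuousAt
  -- the clamped nonlinearity
  let F : ℝ → ℝ → ℝ := fun t u => f t (max (pm t) (min (pp t) u))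
  have hFin : ∀ t u, pm t ≤ u → u ≤ pp t → F t u = f t u := by
    intro t u h1 h2
    simp only [F]
    rw [min_eq_right h2, max_eq_right h1]
  have hFlo : ∀ t u, u ≤ pm t → F t u = f t (pm t) := by
    intro t u h1
    simp only [F]
    rw [min_eq_right (h1.trans (hlt t).le), max_eq_left h1]
  have hFhi : ∀ t u, pp t ≤ u → F t u = f t (pp t) := by
    intro t u h1
    simp only [F]
    rw [min_eq_left h1, max_eq_right (hlt t).le]
  have hFc : Continuous fun q : ℝ × ℝ => F q.1 q.2 := by
    have : Continuous fun q : ℝ × ℝ => (q.1, max (pm q.1) (min (pp q.1) q.2)) := by fun_prop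
    exact hf_cont.comp this
  have hFper : ∀ u, Function.Periodic (fun t => F t u) T := by
    intro u t
    simp only [F]
    rw [hpmT, hppT, hfT _ _ ((hpm0 t).trans (le_max_left _ _))]
  have hred : ∀ t, ∃ t' ∈ Icc 0 T, ∀ u, F t u = F t' u := by
    intro t
    have hper : Function.Periodic F T := by
      intro t
      funext u
      exact hFper u t
    obtain ⟨t', ht', h⟩ := hper.exists_mem_Ico₀ hT t
    exact ⟨t', Ico_subset_Icc_self ht', fun u => by rw [h]⟩
  obtain ⟨B, hB⟩ := isCompact_Icc.exists_bound_of_continuousOn (s := Icc 0 T) hppc.continuousOn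
  have hcl : ∀ t ∈ Icc 0 T, ∀ u, (t, max (pm t) (min (pp t) u)) ∈ Icc 0 T ×ˢ Icc 0 B := by
    intro t ht u
    refine ⟨ht, (hpm0 t).trans (le_max_left _ _), ?_⟩
    refine (max_le (hlt t).le (min_le_left _ _)).trans ?_
    exact (le_abs_self _).trans (hB t ht)
  have hK : IsCompact (Icc 0 T ×ˢ Icc 0 B) := isCompact_Icc.prod isCompact_Icc
  obtain ⟨M, hM⟩ := hK.exists_bound_of_continuousOn hf_cont.continuousOn
  have hFM : ∀ t u, |F t u| ≤ M := by
    intro t u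
    obtain ⟨t', ht', h⟩ := hred t
    rw [h]
    exact hM _ (hcl t' ht' u)
  have hFu : ∀ ε > 0, ∃ δ > 0, ∀ t u v, |u - v| ≤ δ → |F t u - F t v| ≤ ε := by
    intro ε hε
    have huc := hK.uniformContinuousOn_of_continuous hf_cont.continuousOn
    obtain ⟨δ, hδ, H⟩ := Metric.uniformContinuousOn_iff.1 huc ε hε
    refine ⟨δ / 2, by positivity, fun t u v huv => ?_⟩
    obtain ⟨t', ht', h⟩ := hred t
    rw [h, h]
    have := H _ (hcl t' ht' u) _ (hcl t' ht' v) (by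
      rw [Prod.dist_eq, dist_self, max_lt_iff]
      refine ⟨hδ, ?_⟩
      rw [Real.dist_eq]
      have := clamp_lip (pm t') (pp t') u v
      simp only
      linarith)
    rw [Real.dist_eq] at this
    exact this.le
  have hpmT0 : pm T = pm 0 := by simpa using hpmT 0
  obtain ⟨g, hg1, hg2, hg3, hg4⟩ := smooth_below (pm 0) (pp 0)
    (fun a ε => ∀ η : ℝ → ℝ, ODESolOn (fun t v => f t v - ε) η (Set.Icc 0 T) → η 0 = a → a < η T) (by
    intro a₀ ha₀
    obtain ⟨h, d, H, l, hl, hla, h0, H0, hd, hlim, hH⟩ := exists_sol F hFc M hFM hFu a₀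
    have Hle : ∀ t, 0 ≤ t → H t ≤ pp t :=
      comparison_weak H pp _ _ hH hppd (H0 ▸ ha₀.2.le) fun t ht => hFhi t _ ht.le
    have Hge : ∀ t, 0 ≤ t → pm t ≤ H t :=
      comparison_weak pm H _ _ hpmd hH (H0 ▸ ha₀.1.le) fun t ht => (hFlo t _ ht.le).symm
    have HS : ODESolOn f H (Ici 0) := by
      intro t ht
      have := hH t
      rwa [hFin t _ (Hge t ht) (Hle t ht)] at this
    have HT : a₀ < H T := by
      have := (hbasin a₀ ha₀ H HS H0).1 0 le_rfl Nat.zero_lt_one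
      simpa [H0] using this
    have ev1 : ∀ᶠ n in l, a₀ < h n T := (hlim T).eventually_const_lt HT
    have ev2 : ∀ᶠ n : ℕ in l, T < n :=
      hla (tendsto_natCast_atTop_atTop.eventually_gt_atTop T)
    obtain ⟨n, hn1, hn2⟩ := (ev1.and ev2).exists
    set c := 1 / ((n : ℝ) + 1) with hc
    have hc0 : 0 < c := by positivity
    obtain ⟨δ₀, hδ₀, hF⟩ := hFu (c / 2) (by positivity)
    obtain ⟨δ, hδ, hδ1, hδ2⟩ : ∃ δ > 0, δ ≤ δ₀ ∧ 2 * δ < h n T - a₀ := by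
      refine ⟨min δ₀ ((h n T - a₀) / 3), ?_, min_le_left _ _, ?_⟩
      · have : 0 < h n T - a₀ := by linarith
        positivity
      · have := min_le_right δ₀ ((h n T - a₀) / 3)
        linarith
    refine ⟨δ, hδ, c / 4, by positivity, ?_⟩
    intro a ha haa ε hε hεc η hη hη0
    have haa := abs_lt.1 haa
    -- the barrier
    let w : ℝ → ℝ := fun t => h n t - δ
    have hwd : ∀ t ∈ Icc 0 T, HasDerivAt w (d n t) t ∧ d n t ≤ F t (w t) - c / 2 := by
      intro t ht
      obtain ⟨a1, a2⟩ := hd n t ⟨by linarith [ht.1], by linarith [ht.2]⟩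
      refine ⟨a1.sub_const δ, ?_⟩
      have := abs_le.1 (hF t (h n t) (w t) (by simp only [w]; rw [sub_sub_cancel, abs_of_pos hδ]; exact hδ1))
      linarith [this.2]
    have hw0 : w 0 = a₀ - δ := by simp only [w, h0]
    have hwT : a < w T := by simp only [w]; linarith
    have hwpp : ∀ t ∈ Icc 0 T, w t ≤ pp t := by
      refine comparison w pp (d n) _ 0 T (fun t ht => (hwd t ht).1) (fun t _ => hppd t)
        (by linarith [ha₀.2]) ?_
      intro t ht he
      have := (hwd t ht).2
      rw [hFhi t _ he.ge] at this
      linarith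
    have hwpm : ∀ t ∈ Icc 0 T, pm t < w t := by
      intro s hs
      by_contra hcon
      push Not at hcon
      have := comparison w pm (d n) _ s T (fun t ht => (hwd t ⟨hs.1.trans ht.1, ht.2⟩).1)
        (fun t _ => hpmd t) hcon (fun t ht he => by
          have := (hwd t ⟨hs.1.trans ht.1, ht.2⟩).2
          rw [hFlo t _ he.le] at this
          linarith) T ⟨hs.2, le_rfl⟩
      rw [hpmT0] at this
      linarith [ha.1]
    have hwη := comparison w η (d n) _ 0 T (fun t ht => (hwd t ht).1) hη (by linarith)
      (fun t ht he => by
        have := (hwd t ht).2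
        rw [hFin t _ (hwpm t ht).le (hwpp t ht), he] at this
        linarith) T ⟨hT.le, le_rfl⟩
    linarith)
  exact ⟨g, hg1.contDiffOn, fun a _ => hg2 a, hg3 _ (by simp), hg3 _ (by simp), hg4⟩
end
end
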